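/- Let A : ℝ → M₃(ℂ) be a continuous family of 3×3 complex matrices such that A(s) is Hermitian for every s ∈ ℝ, and let V₁, V₂ : ℝ → ℂ³ be two solutions of the system −i V'(s) = A(s) V(s). For u, v ∈ ℂ³ define the wedge product u ∧ v ∈ ℂ³ as the complex conjugate of the standard cross product, i.e. u ∧ v = (conj(u₂v₃ − u₃v₂), conj(u₃v₁ − u₁v₃), conj(u₁v₂ − u₂v₁)). Then, for any fixed s₀ ∈ ℝ, the function W(s) = exp(i·∫_{s₀}^{s} Tr A(s') ds')·(V₁(s) ∧ V₂(s)) is also a solution of −i W'(s) = A(s) W(s). -/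

import Mathlib

open Matrix

/-- Complex wedge product on `ℂ³`: the complex conjugate of the standard cross product,
`u ∧ v = (conj(u₂v₃ − u₃v₂), conj(u₃v₁ − u₁v₃), conj(u₁v₂ − u₂v₁))`. -/
def cwedge (u v : Fin 3 → ℂ) : Fin 3 → ℂ :=
  ![(starRingEnd ℂ) (u 1 * v 2 - u 2 * v 1),
    (starRingEnd ℂ) (u 2 * v 0 - u 0 * v 2),
    (starRingEnd ℂ) (u 0 * v 1 - u 1 * v 0)]

/-!
On a cross product, `M` acts by the Leibniz rule as `tr M - Mᵀ`. Conjugating, the wedge of two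
solutions of `V' = i A V` satisfies `w' = i (Aᴴ - tr Aᴴ) w`, and the factor `exp (i ∫ tr Aᴴ)`
absorbs the scalar term. What remains is `W' = i Aᴴ W`, the original system when `A` is Hermitian.
-/

-- The cofactor identity `(N *ᵥ u) ⨯₃ (N *ᵥ v) = (u ⨯₃ v) ᵥ* adjugate N`, to first order in `M` at
-- `N = 1 + M`.
theorem mulVec_cross_add_cross_mulVec {R : Type*} [CommRing R]
    (M : Matrix (Fin 3) (Fin 3) R) (u v : Fin 3 → R) :
    (M *ᵥ u) ⨯₃ v + u ⨯₃ (M *ᵥ v) = M.trace • (u ⨯₃ v) - (u ⨯₃ v) ᵥ* M := by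
  have mulVec_coord (w : Fin 3 → R) (i : Fin 3) :
      (M *ᵥ w) i = M i 0 * w 0 + M i 1 * w 1 + M i 2 * w 2 := by
    simp only [mulVec, dotProduct, Fin.sum_univ_three]
  have vecMul_coord (w : Fin 3 → R) (j : Fin 3) :
      (w ᵥ* M) j = w 0 * M 0 j + w 1 * M 1 j + w 2 * M 2 j := by
    simp only [vecMul, dotProduct, Fin.sum_univ_three]
  ext i
  simp only [Pi.add_apply, Pi.sub_apply, Pi.smul_apply, smul_eq_mul, vecMul_coord, cross_apply,
    mulVec_coord, trace_fin_three]
  fin_cases i <;> simp only [Fin.zero_eta, Fin.mk_one, Fin.reduceFinMk, cons_val] <;> ring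

theorem hasDerivAt_cross {𝕜 𝔸 : Type*} [NontriviallyNormedField 𝕜] [NormedCommRing 𝔸]
    [NormedAlgebra 𝕜 𝔸] {f g : 𝕜 → Fin 3 → 𝔸} {f' g' : Fin 3 → 𝔸} {x : 𝕜}
    (hf : HasDerivAt f f' x) (hg : HasDerivAt g g' x) :
    HasDerivAt (fun y => f y ⨯₃ g y) (f' ⨯₃ g x + f x ⨯₃ g') x := by
  have minor (i j : Fin 3) : HasDerivAt (fun y => f y i * g y j - f y j * g y i)
      ((f' i * g x j - f' j * g x i) + (f x i * g' j - f x j * g' i)) x :=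
    (((hasDerivAt_pi.1 hf i).mul (hasDerivAt_pi.1 hg j)).sub
      ((hasDerivAt_pi.1 hf j).mul (hasDerivAt_pi.1 hg i))).congr_deriv
        (add_sub_add_comm _ _ _ _)
  simp only [cross_apply]
  rw [hasDerivAt_pi]
  intro i
  fin_cases i
  exacts [minor 1 2, minor 2 0, minor 0 1]

theorem cwedge_eq_star_cross (u v : Fin 3 → ℂ) : cwedge u v = star (u ⨯₃ v) := by
  ext i
  fin_cases i <;> rfl

theorem cwedge_mulVec_add_cwedge_mulVec (M : Matrix (Fin 3) (Fin 3) ℂ) (u v : Fin 3 → ℂ) :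
    cwedge (M *ᵥ u) v + cwedge u (M *ᵥ v) = Mᴴ.trace • cwedge u v - Mᴴ *ᵥ cwedge u v := by
  simp only [cwedge_eq_star_cross, ← star_add, mulVec_cross_add_cross_mulVec, star_sub,
    star_smul, star_vecMul, trace_conjTranspose]

theorem hasDerivAt_cwedge {f g : ℝ → Fin 3 → ℂ} {f' g' : Fin 3 → ℂ} {s : ℝ}
    (hf : HasDerivAt f f' s) (hg : HasDerivAt g g' s) :
    HasDerivAt (fun t => cwedge (f t) (g t)) (cwedge f' (g s) + cwedge (f s) g') s := by
  simp only [cwedge_eq_star_cross, ← star_add]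
  exact (hasDerivAt_cross hf hg).star

theorem hasDerivAt_cwedge_of_hasDerivAt_mulVec {M : Matrix (Fin 3) (Fin 3) ℂ}
    {f g : ℝ → Fin 3 → ℂ} {s : ℝ}
    (hf : HasDerivAt f (M *ᵥ f s) s) (hg : HasDerivAt g (M *ᵥ g s) s) :
    HasDerivAt (fun t => cwedge (f t) (g t))
      (Mᴴ.trace • cwedge (f s) (g s) - Mᴴ *ᵥ cwedge (f s) (g s)) s := by
  rw [← cwedge_mulVec_add_cwedge_mulVec]
  exact hasDerivAt_cwedge hf hg

theorem hasDerivAt_cexp_mul_integral {f : ℝ → ℂ} (hf : Continuous f) (c : ℂ) (s₀ s : ℝ) :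
    HasDerivAt (fun r => Complex.exp (c * ∫ t in s₀..r, f t))
      (Complex.exp (c * ∫ t in s₀..s, f t) * (c * f s)) s :=
  ((hf.integral_hasStrictDerivAt s₀ s).hasDerivAt.const_mul c).cexp

theorem wedge_of_solutions_is_solution_general {A : ℝ → Matrix (Fin 3) (Fin 3) ℂ}
    (hA : Continuous fun s => (A s).trace) {V₁ V₂ : ℝ → Fin 3 → ℂ} {s : ℝ}
    (hV₁ : HasDerivAt V₁ (Complex.I • A s *ᵥ V₁ s) s)
    (hV₂ : HasDerivAt V₂ (Complex.I • A s *ᵥ V₂ s) s) (s₀ : ℝ) :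
    HasDerivAt
      (fun r => Complex.exp (Complex.I * ∫ t in s₀..r, (A t)ᴴ.trace) • cwedge (V₁ r) (V₂ r))
      (Complex.I • (A s)ᴴ *ᵥ
        (Complex.exp (Complex.I * ∫ t in s₀..s, (A t)ᴴ.trace) • cwedge (V₁ s) (V₂ s))) s := by
  have htrace : Continuous fun t => (A t)ᴴ.trace := by
    simpa only [trace_conjTranspose] using hA.star
  have hphase := hasDerivAt_cexp_mul_integral htrace Complex.I s₀ s
  rw [← smul_mulVec] at hV₁ hV₂
  have hwedge := hasDerivAt_cwedge_of_hasDerivAt_mulVec hV₁ hV₂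
  have hadjoint : (Complex.I • A s)ᴴ = -Complex.I • (A s)ᴴ := by
    rw [conjTranspose_smul, Complex.star_def, Complex.conj_I]
  rw [hadjoint, trace_smul, smul_mulVec] at hwedge
  refine (hphase.smul hwedge).congr_deriv ?_
  rw [mulVec_smul]
  module

/-- If `A(s)` is a continuous family of Hermitian 3×3 matrices and `V₁, V₂` solve
`−i V' = A(s) V`, then `W(s) = exp(i ∫_{s₀}^s Tr A) · (V₁(s) ∧ V₂(s))` also solves
`−i W' = A(s) W`. -/
theorem wedge_of_solutions_is_solution (A : ℝ → Matrix (Fin 3) (Fin 3) ℂ)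
    (hAcont : Continuous A) (hAherm : ∀ s : ℝ, (A s).IsHermitian)
    (V₁ V₂ : ℝ → Fin 3 → ℂ)
    (hV₁ : ∀ s : ℝ, HasDerivAt V₁ (Complex.I • (A s).mulVec (V₁ s)) s)
    (hV₂ : ∀ s : ℝ, HasDerivAt V₂ (Complex.I • (A s).mulVec (V₂ s)) s)
    (s₀ : ℝ) :
    ∀ s : ℝ, HasDerivAt
      (fun s : ℝ => Complex.exp (Complex.I * ∫ t in s₀..s, (A t).trace) •
        cwedge (V₁ s) (V₂ s))
      (Complex.I • (A s).mulVec
        (Complex.exp (Complex.I * ∫ t in s₀..s, (A t).trace) •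
          cwedge (V₁ s) (V₂ s))) s := by
  intro s
  simpa only [(hAherm _).eq] using
    wedge_of_solutions_is_solution_general hAcont.matrix_trace (hV₁ s) (hV₂ s) s₀
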